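/- (Vanishing of the acyclicity penalty on DAGs, used in the proof of Proposition 1.) Let d : ℕ and let A : Matrix (Fin d) (Fin d) ℝ be a binary adjacency matrix. If A is acyclic, then trace(Matrix.exp A) = d, i.e., h(A) = 0. -/

import Mathlib

/-- A binary adjacency matrix: every entry is 0 or 1. -/
def IsBinary {d : ℕ} (A : Matrix (Fin d) (Fin d) ℝ) : Prop :=
  ∀ i j, A i j = 0 ∨ A i j = 1

/-- The directed graph induced by `A` (edge `i → j` iff `A i j = 1`) is acyclic. -/
def IsAcyclicMat {d : ℕ} (A : Matrix (Fin d) (Fin d) ℝ) : Prop :=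
  Irreflexive (Relation.TransGen (fun i j => A i j = 1))

/-- The smooth acyclicity function `h(A) = trace (exp A) - d`. -/
noncomputable def hAcyc {d : ℕ} (A : Matrix (Fin d) (Fin d) ℝ) : ℝ :=
  Matrix.trace (NormedSpace.exp A) - d

open Classical in
/-- The penalized objective `F(A) = S(A) + λ₁·1[A ∉ DAGs] + λ₂·h(A)`. -/
noncomputable def penObj {d : ℕ} (S : Matrix (Fin d) (Fin d) ℝ → ℝ) (lam1 lam2 : ℝ)
    (A : Matrix (Fin d) (Fin d) ℝ) : ℝ :=
  S A + lam1 * (if IsAcyclicMat A then (0 : ℝ) else 1) + lam2 * hAcyc A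

/-!
The trace of `exp A` is the sum of the series `∑ k, tr (A ^ k) / k!`. A nonzero diagonal entry of
`A ^ k` with `k ≠ 0` comes from a closed walk of length `k`, so acyclicity kills every term except
`tr (A ^ 0)`, which counts the vertices.
-/

section AcyclicSupport

variable {n R : Type*} [Fintype n] [DecidableEq n] [Semiring R] {A : Matrix n n R}

theorem transGen_of_pow_apply_ne_zero {k : ℕ} (hk : k ≠ 0) {i j : n} (h : (A ^ k) i j ≠ 0) :
    Relation.TransGen (fun i j => A i j ≠ 0) i j := by
  obtain ⟨k, rfl⟩ := Nat.exists_eq_add_one_of_ne_zero hk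
  clear hk
  induction k generalizing j with
  | zero => exact .single (by simpa using h)
  | succ k ih =>
    rw [pow_succ, Matrix.mul_apply] at h
    obtain ⟨l, -, hl⟩ := Finset.exists_ne_zero_of_sum_ne_zero h
    have walk_to_l : Relation.TransGen (fun i j => A i j ≠ 0) i l := ih (left_ne_zero_of_mul hl)
    exact walk_to_l.tail (right_ne_zero_of_mul hl)

theorem trace_pow_eq_zero_of_irrefl_transGen
    (hA : Std.Irrefl (Relation.TransGen fun i j => A i j ≠ 0)) {k : ℕ} (hk : k ≠ 0) :
    (A ^ k).trace = 0 :=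
  Finset.sum_eq_zero fun i _ => not_not.mp fun h => hA.irrefl i (transGen_of_pow_apply_ne_zero hk h)

end AcyclicSupport

section TraceExp

open scoped Nat

variable {n 𝔸 : Type*} [Fintype n] [DecidableEq n] [NormedRing 𝔸] [NormedAlgebra ℚ 𝔸]
  [CompleteSpace 𝔸]

open scoped Matrix.Norms.Operator in
theorem hasSum_trace_exp (A : Matrix n n 𝔸) :
    HasSum (fun k : ℕ => (k !⁻¹ : ℚ) • (A ^ k).trace) (NormedSpace.exp A).trace := by
  have exp_series : HasSum (fun k : ℕ => (k !⁻¹ : ℚ) • A ^ k) (NormedSpace.exp A) :=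
    -- The uniformity of the operator norm is the entrywise one only after unfolding the norm, so
    -- instance search does not find completeness by itself.
    have : @CompleteSpace (Matrix n n 𝔸) PseudoMetricSpace.toUniformSpace :=
      inferInstanceAs (CompleteSpace (n → n → 𝔸))
    NormedSpace.exp_series_hasSum_exp' A
  simpa only [Function.comp_def, Matrix.traceAddMonoidHom_apply, Matrix.trace_smul] using
    exp_series.map (Matrix.traceAddMonoidHom n 𝔸) continuous_id.matrix_trace

variable {A : Matrix n n 𝔸}

theorem trace_exp_eq_card_of_trace_pow_eq_zero (h : ∀ k ≠ 0, (A ^ k).trace = 0) :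
    (NormedSpace.exp A).trace = Fintype.card n := by
  have only_zeroth_term : ∀ k ≠ 0, (k !⁻¹ : ℚ) • (A ^ k).trace = 0 := fun k hk => by
    rw [h k hk, smul_zero]
  calc (NormedSpace.exp A).trace
      = (0 !⁻¹ : ℚ) • (A ^ 0).trace :=
        (hasSum_trace_exp A).unique (hasSum_single 0 only_zeroth_term)
    _ = Fintype.card n := by simp

theorem trace_exp_eq_of_acyclic_general
    (hA : Std.Irrefl (Relation.TransGen fun i j => A i j ≠ 0)) :
    (NormedSpace.exp A).trace = Fintype.card n :=
  trace_exp_eq_card_of_trace_pow_eq_zero fun _ => trace_pow_eq_zero_of_irrefl_transGen hA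

end TraceExp

theorem trace_exp_eq_of_acyclic (d : ℕ) (A : Matrix (Fin d) (Fin d) ℝ)
    (hA : IsBinary A) (hacyc : IsAcyclicMat A) :
    Matrix.trace (NormedSpace.exp A) = (d : ℝ) := by
  have edge_of_ne_zero : ∀ i j, A i j ≠ 0 → A i j = 1 := fun i j => (hA i j).resolve_left
  simpa using trace_exp_eq_of_acyclic_general
    ⟨fun i h => hacyc i (Relation.TransGen.mono edge_of_ne_zero _ _ h)⟩
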